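/- arXiv:2109.05700 — 9 statements merged into one kernel-verified Lean document; each statement's English description precedes it below -/
import Mathlib

section
/- Lower bound on the W₋₁ branch of the Lambert W function: for every real number x with −1/e² ≤ x < 0 and every real number w such that w ≤ −1 and w·exp(w) = x, one has w ≥ log(−x) − 4·log(−log(−x)). -/
/-- Lower bound on the `W₋₁` branch of the Lambert W function: for every real `x` with
`-1/e² ≤ x < 0` and every real `w ≤ -1` with `w * exp w = x`, one has
`w ≥ log(-x) - 4 * log(-log(-x))`. -/
theorem lambertW_neg1_lower_bound (x w : ℝ)
    (hx1 : -1 / Real.exp 1 ^ 2 ≤ x) (hx2 : x < 0)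
    (hw1 : w ≤ -1) (hw2 : w * Real.exp w = x) :
    Real.log (-x) - 4 * Real.log (-Real.log (-x)) ≤ w := by
  have hu : 0 < -w := by linarith
  have hlog : Real.log (-x) = Real.log (-w) + w := by
    rw [← hw2, show -(w * Real.exp w) = (-w) * Real.exp w by ring,
      Real.log_mul hu.ne' (Real.exp_pos w).ne', Real.log_exp]
  have hL : Real.log (-x) ≤ -2 := by
    have h1 : -x ≤ Real.exp (-2) := by
      have h2 : Real.exp (-2) = 1 / Real.exp 1 ^ 2 := by
        rw [Real.exp_neg, ← Real.exp_nat_mul]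
        norm_num
      rw [h2]
      have h3 : -1 / Real.exp 1 ^ 2 = -(1 / Real.exp 1 ^ 2) := by ring
      linarith
    have h4 := Real.log_le_log (by linarith : 0 < -x) h1
    rwa [Real.log_exp] at h4
  have hhalf : Real.log (-w) ≤ -w / 2 := by
    have h1 := Real.log_le_sub_one_of_pos (by linarith : 0 < -w / 2)
    rw [Real.log_div hu.ne' (by norm_num)] at h1
    have h2 := Real.log_le_sub_one_of_pos (by norm_num : (0 : ℝ) < 2)
    linarith
  have key : Real.log (-w) ≤ 4 * Real.log (-Real.log (-x)) := by
    obtain ⟨L, hLdef⟩ : ∃ L, L = -Real.log (-x) := ⟨_, rfl⟩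
    rw [← hLdef]
    have hL2 : 2 ≤ L := by linarith
    have h1 : -w ≤ L ^ 4 := by
      have h3 : (2 : ℝ) ^ 3 ≤ L ^ 3 := by gcongr
      have h4 : -w ≤ 2 * L := by linarith
      nlinarith
    have h2 := Real.log_le_log hu h1
    rw [Real.log_pow] at h2
    exact_mod_cast h2
  linarith
end

section
/- Upper bound on the W₋₁ branch of the Lambert W function: for every real number x with −1/e² ≤ x < 0 and every real number w such that w ≤ −1 and w·exp(w) = x, one has w ≤ log(−x) − (1/4)·log(−log(−x)). -/
/-- Upper bound on the `W₋₁` branch of the Lambert W function: for every real `x` with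
`-1/e² ≤ x < 0` and every real `w ≤ -1` with `w * exp w = x`, one has
`w ≤ log(-x) - (1/4) * log(-log(-x))`. -/
theorem lambertW_neg1_upper_bound (x w : ℝ)
    (hx1 : -1 / Real.exp 1 ^ 2 ≤ x) (hx2 : x < 0)
    (hw1 : w ≤ -1) (hw2 : w * Real.exp w = x) :
    w ≤ Real.log (-x) - 1 / 4 * Real.log (-Real.log (-x)) := by
  have hv : (0:ℝ) < -w := by linarith
  have hlog : Real.log (-x) = Real.log (-w) + w := by
    rw [← hw2, ← neg_mul, Real.log_mul hv.ne' (Real.exp_pos w).ne', Real.log_exp]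
  have h0 : 0 ≤ Real.log (-w) := Real.log_nonneg (by linarith)
  have hL : 2 ≤ -Real.log (-x) := by
    have h1 : -x ≤ Real.exp (-2) := by
      have h2 : Real.exp (-2) = 1 / Real.exp 1 ^ 2 := by
        rw [Real.exp_neg, ← Real.exp_nat_mul]; norm_num
      rw [h2]; rw [neg_div] at hx1; linarith
    have h3 := Real.log_le_log (by linarith : 0 < -x) h1
    rw [Real.log_exp] at h3
    linarith
  have h4 : Real.log (-Real.log (-x)) ≤ Real.log (-w) :=
    Real.log_le_log (by linarith) (by linarith)
  linarith
end

section
/- Time-difference bound for confidence radii (Lemma 4 of the paper): let c̄ > e be a real constant and define α(t) = sqrt(2·log(c̄·t)/t) for real t ≥ 1. Given real numbers Δ ∈ (0,1) and σ > 1 with σ·Δ ≤ 1, suppose t̃ ≥ 1 and t′ ≥ 1 are real numbers satisfying α(t̃) = σ·Δ/8 and α(t′) = Δ/8. Then t′ − t̃ ≤ ( (128/Δ²)·log(128·c̄/Δ²) − (128/(σ²·Δ²))·log(128·c̄/(σ²·Δ²)) ) + ( (512/Δ²)·log(log(128·c̄/Δ²)) − (32/(σ²·Δ²))·log(log(128·c̄/(σ²·Δ²)))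 ). -/
theorem aux_bound (c d t : ℝ) (hc : Real.exp 1 < c) (hd : 0 < d) (hd1 : d ≤ 1) (ht : 1 ≤ t)
    (h : Real.sqrt (2 * Real.log (c * t) / t) = d / 8) :
    128 / d ^ 2 * Real.log (128 * c / d ^ 2)
      + 32 / d ^ 2 * Real.log (Real.log (128 * c / d ^ 2)) ≤ t ∧
    t ≤ 128 / d ^ 2 * Real.log (128 * c / d ^ 2)
      + 512 / d ^ 2 * Real.log (Real.log (128 * c / d ^ 2)) := by
  have hc0 : 0 < c := (Real.exp_pos 1).trans hc
  have ht0 : 0 < t := by linarith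
  have hd2 : 0 < d ^ 2 := by positivity
  have hd21 : d ^ 2 ≤ 1 := by nlinarith
  have hx1 : 1 < Real.log (c * t) := by
    rw [Real.lt_log_iff_exp_lt (by positivity)]
    nlinarith
  set x := Real.log (c * t) with hx
  have hq : 2 * x / t = (d / 8) ^ 2 := by
    rw [← h, Real.sq_sqrt (by positivity)]
  have htx : t = 128 / d ^ 2 * x := by
    field_simp at hq ⊢
    linarith
  have hA : 128 ≤ 128 / d ^ 2 := by
    rw [le_div_iff₀ hd2]; nlinarith
  have hL : x = Real.log (128 * c / d ^ 2) + Real.log x := by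
    rw [← Real.log_mul (by positivity) (by positivity), hx]
    congr 1
    rw [← hx]
    nth_rewrite 1 [htx]
    ring
  have he : Real.exp 1 < 128 := by linarith [Real.exp_one_lt_d9]
  have hL2 : 2 < Real.log (128 * c / d ^ 2) := by
    rw [Real.lt_log_iff_exp_lt (by positivity)]
    have h1 : Real.exp 2 = Real.exp 1 * Real.exp 1 := by
      rw [← Real.exp_add]; norm_num
    have h2 : 128 * c / d ^ 2 = 128 / d ^ 2 * c := by ring
    rw [h1, h2]
    have := Real.exp_pos 1
    apply mul_lt_mul'' (by linarith) hc <;> positivity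
  set L := Real.log (128 * c / d ^ 2) with hLdef
  have hlx : 0 < Real.log x := Real.log_pos hx1
  have hlL : 0 < Real.log L := Real.log_pos (by linarith)
  have hlow : Real.log L ≤ Real.log x := Real.log_le_log (by linarith) (by linarith)
  have hhalf : Real.log x ≤ x / 2 := by
    have h3 := Real.log_le_sub_one_of_pos (show 0 < x / 2 by linarith)
    rw [Real.log_div (by linarith) (by norm_num)] at h3
    have := Real.log_two_lt_d9
    linarith
  have hup : Real.log x ≤ 2 * Real.log L := by
    have h4 : Real.log x ≤ Real.log (L ^ 2) :=
      Real.log_le_log (by linarith) (by nlinarith)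
    rw [Real.log_pow] at h4
    exact_mod_cast h4
  have hA0 : 0 < 128 / d ^ 2 := by linarith
  have e1 : 32 / d ^ 2 = 128 / d ^ 2 * (1 / 4) := by ring
  have e2 : 512 / d ^ 2 = 128 / d ^ 2 * 4 := by ring
  rw [htx, e1, e2, mul_assoc, mul_assoc, ← mul_add, ← mul_add]
  constructor
  · apply mul_le_mul_of_nonneg_left _ hA0.le
    linarith
  · apply mul_le_mul_of_nonneg_left _ hA0.le
    linarith

/-- Time-difference bound for confidence radii (Lemma 4 of the paper). With
`α(t) = sqrt(2 log(c̄ t) / t)` for `t ≥ 1` and `c̄ > e`, given `Δ ∈ (0,1)`, `σ > 1` with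
`σΔ ≤ 1`, and `t̃, t' ≥ 1` with `α(t̃) = σΔ/8` and `α(t') = Δ/8`, the difference `t' - t̃`
is bounded as stated. -/
theorem time_difference_bound (cbar Δ σ ttil t' : ℝ)
    (hc : Real.exp 1 < cbar)
    (hΔ0 : 0 < Δ) (hΔ1 : Δ < 1) (hσ : 1 < σ) (hσΔ : σ * Δ ≤ 1)
    (httil : 1 ≤ ttil) (ht' : 1 ≤ t')
    (h1 : Real.sqrt (2 * Real.log (cbar * ttil) / ttil) = σ * Δ / 8)
    (h2 : Real.sqrt (2 * Real.log (cbar * t') / t') = Δ / 8) :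
    t' - ttil ≤
      (128 / Δ ^ 2 * Real.log (128 * cbar / Δ ^ 2)
        - 128 / (σ ^ 2 * Δ ^ 2) * Real.log (128 * cbar / (σ ^ 2 * Δ ^ 2)))
      + (512 / Δ ^ 2 * Real.log (Real.log (128 * cbar / Δ ^ 2))
        - 32 / (σ ^ 2 * Δ ^ 2) * Real.log (Real.log (128 * cbar / (σ ^ 2 * Δ ^ 2)))) := by
  have hs : 0 < σ * Δ := by positivity
  have a := (aux_bound cbar (σ * Δ) ttil hc hs hσΔ httil h1).1
  have b := (aux_bound cbar Δ t' hc hΔ0 hΔ1.le ht' h2).2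
  rw [mul_pow] at a
  linarith
end

section
/- Branch identification for solutions of the confidence-radius equation: let c̄ > e be a real constant and define α(t) = sqrt(2·log(c̄·t)/t) for real t ≥ 1. For any real θ > 0, if t ≥ 1 is a real number satisfying α(t) = θ, then the number w := −θ²·t/2 satisfies w·exp(w) = −θ²/(2·c̄) and w < −1 (i.e., the solution t equals −(2/θ²)·W₋₁(−θ²/(2·c̄)), where W₋₁ is the branch of the Lambert W function taking values ≤ −1). -/
/-- Branch identification for solutions of the confidence-radius equation: with
`α(t) = sqrt(2 log(c̄ t) / t)` and `c̄ > e`, if `θ > 0` and `t ≥ 1` satisfies `α(t) = θ`,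
then `w := -θ² t / 2` satisfies `w · exp w = -θ² / (2 c̄)` and `w < -1`, i.e. `t` corresponds
to the `W₋₁` branch of the Lambert W function. -/
theorem branch_identification (cbar θ t : ℝ)
    (hc : Real.exp 1 < cbar) (hθ : 0 < θ) (ht : 1 ≤ t)
    (hα : Real.sqrt (2 * Real.log (cbar * t) / t) = θ) :
    (-(θ ^ 2 * t / 2)) * Real.exp (-(θ ^ 2 * t / 2)) = -(θ ^ 2 / (2 * cbar)) ∧
      -(θ ^ 2 * t / 2) < -1 := by
  have hc0 : 0 < cbar := (Real.exp_pos 1).trans hc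
  have ht0 : 0 < t := by linarith
  have hct : 0 < cbar * t := mul_pos hc0 ht0
  have hlog : 1 < Real.log (cbar * t) := by
    rw [Real.lt_log_iff_exp_lt hct]
    nlinarith
  have hsq : θ ^ 2 = 2 * Real.log (cbar * t) / t := by
    rw [← hα, Real.sq_sqrt]
    positivity
  have hw : θ ^ 2 * t / 2 = Real.log (cbar * t) := by
    rw [hsq]
    field_simp
  constructor
  · have he : Real.exp (-(θ ^ 2 * t / 2)) = (cbar * t)⁻¹ := by
      rw [hw, Real.exp_neg, Real.exp_log hct]
    rw [he]
    field_simp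
  · rw [hw]
    linarith
end

section
/- Two-sided explicit bound on the solution of the confidence-radius equation: let c̄ > e be a real constant and define α(t) = sqrt(2·log(c̄·t)/t) for real t ≥ 1. For any real θ > 0 with θ² ≤ 2·c̄/e², if t ≥ 1 is a real number satisfying α(t) = θ, then (2/θ²)·( log(2·c̄/θ²) + (1/4)·log(log(2·c̄/θ²)) ) ≤ t ≤ (2/θ²)·( log(2·c̄/θ²) + 4·log(log(2·c̄/θ²)) ). -/
/-- Two-sided explicit bound on the solution of the confidence-radius equation: with
`α(t) = sqrt(2 log(c̄ t) / t)`, `c̄ > e`, `θ > 0`, `θ² ≤ 2c̄/e²`, if `t ≥ 1` satisfies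
`α(t) = θ`, then
`(2/θ²)(log(2c̄/θ²) + (1/4) log log(2c̄/θ²)) ≤ t ≤ (2/θ²)(log(2c̄/θ²) + 4 log log(2c̄/θ²))`. -/
theorem two_sided_solution_bound (cbar θ t : ℝ)
    (hc : Real.exp 1 < cbar) (hθ : 0 < θ)
    (hθ2 : θ ^ 2 ≤ 2 * cbar / Real.exp 1 ^ 2)
    (ht : 1 ≤ t)
    (hα : Real.sqrt (2 * Real.log (cbar * t) / t) = θ) :
    2 / θ ^ 2 * (Real.log (2 * cbar / θ ^ 2)
        + 1 / 4 * Real.log (Real.log (2 * cbar / θ ^ 2))) ≤ t ∧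
      t ≤ 2 / θ ^ 2 * (Real.log (2 * cbar / θ ^ 2)
        + 4 * Real.log (Real.log (2 * cbar / θ ^ 2))) := by
  have he : 0 < Real.exp 1 := Real.exp_pos 1
  have hc0 : 0 < cbar := he.trans hc
  have ht0 : 0 < t := by linarith
  have hθ20 : 0 < θ ^ 2 := by positivity
  have hct : Real.exp 1 < cbar * t := by nlinarith
  have hs1 : 1 < Real.log (cbar * t) := by
    rw [Real.lt_log_iff_exp_lt (by positivity)]; exact hct
  have hsq : θ ^ 2 = 2 * Real.log (cbar * t) / t := by
    rw [← hα, Real.sq_sqrt (by positivity)]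
  have hL2 : 2 ≤ Real.log (2 * cbar / θ ^ 2) := by
    rw [Real.le_log_iff_exp_le (by positivity), le_div_iff₀ hθ20]
    rw [le_div_iff₀ (by positivity), ← Real.exp_nat_mul] at hθ2
    norm_num at hθ2
    linarith
  have hts : t = 2 / θ ^ 2 * Real.log (cbar * t) := by
    have h0 : Real.log (cbar * t) ≠ 0 := by positivity
    rw [hsq]
    generalize Real.log (cbar * t) = s at h0 ⊢
    field_simp
  have hlog : Real.log (cbar * t)
      = Real.log (2 * cbar / θ ^ 2) + Real.log (Real.log (cbar * t)) := by
    rw [← Real.log_mul (by positivity) (by positivity)]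
    congr 1
    calc cbar * t = cbar * (2 / θ ^ 2 * Real.log (cbar * t)) := by rw [← hts]
      _ = _ := by ring
  generalize Real.log (2 * cbar / θ ^ 2) = L at *
  generalize Real.log (cbar * t) = s at *
  have hls : 0 < Real.log s := Real.log_pos hs1
  have hlL : 0 < Real.log L := Real.log_pos (by linarith)
  have h1 : Real.log L ≤ Real.log s := Real.log_le_log (by linarith) (by linarith)
  have h2 : Real.log s ≤ s / 2 := by
    have h3 := Real.log_le_sub_one_of_pos (show 0 < s / 2 by linarith)
    rw [Real.log_div (by linarith) (by norm_num)] at h3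
    have h4 := Real.log_le_sub_one_of_pos (show (0:ℝ) < 2 by norm_num)
    linarith
  have h5 : Real.log s ≤ 2 * Real.log L := by
    have h6 : Real.log s ≤ Real.log (L ^ 2) :=
      Real.log_le_log (by linarith) (by nlinarith)
    rw [Real.log_pow] at h6
    exact_mod_cast h6
  constructor
  · rw [hts]
    exact mul_le_mul_of_nonneg_left (by linarith) (by positivity)
  · rw [hts]
    exact mul_le_mul_of_nonneg_left (by linarith) (by positivity)
end

section
/- Correctness and termination of local successive elimination (Lemma 2 of the paper, stated deterministically on the concentration event): let A be a finite set with |A| ≥ 2, K ≥ 1 a natural number, δ ∈ (0,1), c ≥ 2 a real number, and define α(t) = sqrt( log(4·K·|A|·t²/δ) / t ) for integers t ≥ 1. Let r : A → [0,1] have a unique maximizer a₁, and suppose r̂ : A × {1,2,…} → ℝ satisfies |r̂_ℓ(t) − r_ℓ| ≤ α(t) for every ℓ ∈ A and integer t ≥ 1. Define the active sets recursively by S(1) = A and S(t+1) = { ℓ ∈ S(t) : max_{j ∈ S(t)} r̂_j(t) − r̂_ℓ(t) < c·α(t) }. Then: (i) a₁ ∈ S(t) for every t ≥ 1; (ii)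 for every ℓ ∈ A \ {a₁} and every t ≥ 1 with α(t) ≤ (r_{a₁} − r_ℓ)/(c+2), one has ℓ ∉ S(t+1) (for c = 2 this is the paper's condition α(t) ≤ (r_{a₁} − r_ℓ)/4); (iii) there exists an integer t̄ ≥ 1 such that S(t) = {a₁} for all t > t̄. -/
/-- Correctness and termination of local successive elimination (Lemma 2 of the paper,
stated deterministically on the concentration event). With confidence radius
`α(t) = sqrt(log(4 K |A| t² / δ) / t)`, unique best arm `a₁`, empirical means `rhat` within
`α(t)` of the true means, and active sets `S(1) = A`,
`S(t+1) = {ℓ ∈ S(t) : max_{j ∈ S(t)} rhat j t - rhat ℓ t < c α(t)}`: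
(i) `a₁` is never eliminated; (ii) any suboptimal arm `ℓ` is eliminated once
`α(t) ≤ (r a₁ - r ℓ)/(c+2)`; (iii) eventually `S(t) = {a₁}`. -/
theorem local_successive_elimination {κ : Type*} [DecidableEq κ]
    (A : Finset κ) (hA : 2 ≤ A.card) (K : ℕ) (hK : 1 ≤ K)
    (δ : ℝ) (hδ0 : 0 < δ) (hδ1 : δ < 1) (c : ℝ) (hc : 2 ≤ c)
    (α : ℕ → ℝ)
    (hα : ∀ t : ℕ, 1 ≤ t →
      α t = Real.sqrt (Real.log (4 * (K : ℝ) * (A.card : ℝ) * (t : ℝ) ^ 2 / δ) / (t : ℝ)))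
    (r : κ → ℝ) (hr : ∀ ℓ ∈ A, r ℓ ∈ Set.Icc (0 : ℝ) 1)
    (a₁ : κ) (ha₁ : a₁ ∈ A) (hmax : ∀ ℓ ∈ A, ℓ ≠ a₁ → r ℓ < r a₁)
    (rhat : κ → ℕ → ℝ)
    (hconc : ∀ ℓ ∈ A, ∀ t : ℕ, 1 ≤ t → |rhat ℓ t - r ℓ| ≤ α t)
    (S : ℕ → Finset κ) (hS1 : S 1 = A)
    (hSrec : ∀ t : ℕ, 1 ≤ t → ∀ ℓ : κ,
      ℓ ∈ S (t + 1) ↔ ℓ ∈ S t ∧ ∀ j ∈ S t, rhat j t - rhat ℓ t < c * α t) :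
    (∀ t : ℕ, 1 ≤ t → a₁ ∈ S t) ∧
    (∀ ℓ ∈ A, ℓ ≠ a₁ → ∀ t : ℕ, 1 ≤ t →
      α t ≤ (r a₁ - r ℓ) / (c + 2) → ℓ ∉ S (t + 1)) ∧
    (∃ tbar : ℕ, 1 ≤ tbar ∧ ∀ t : ℕ, tbar < t → S t = {a₁}) := by
  have hcard : (2 : ℝ) ≤ (A.card : ℝ) := by exact_mod_cast hA
  have hK' : (1 : ℝ) ≤ (K : ℝ) := by exact_mod_cast hK
  have hpos : ∀ t : ℕ, 1 ≤ t → 0 < α t := by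
    intro t ht
    rw [hα t ht]
    have ht' : (1 : ℝ) ≤ (t : ℝ) := by exact_mod_cast ht
    apply Real.sqrt_pos.2
    apply div_pos _ (by linarith)
    apply Real.log_pos
    rw [lt_div_iff₀ hδ0]
    have h1 : (1 : ℝ) ≤ (t : ℝ) ^ 2 := one_le_pow₀ ht'
    have h2 : (1 : ℝ) * 2 ≤ (K : ℝ) * (A.card : ℝ) :=
      mul_le_mul hK' hcard (by norm_num) (by linarith)
    have h3 : (1 * 2 : ℝ) * 1 ≤ ((K : ℝ) * (A.card : ℝ)) * (t : ℝ) ^ 2 :=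
      mul_le_mul h2 h1 (by norm_num) (by linarith)
    nlinarith
  have hsub : ∀ t : ℕ, 1 ≤ t → S t ⊆ A := by
    intro t ht
    induction t, ht using Nat.le_induction with
    | base => rw [hS1]
    | succ n hn ih =>
      intro x hx
      exact ih ((hSrec n hn x).1 hx).1
  have h1 : ∀ t : ℕ, 1 ≤ t → a₁ ∈ S t := by
    intro t ht
    induction t, ht using Nat.le_induction with
    | base => rw [hS1]; exact ha₁
    | succ n hn ih =>
      refine (hSrec n hn a₁).2 ⟨ih, fun j hj => ?_⟩
      have hp := hpos n hn
      by_cases hja : j = a₁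
      · subst hja
        rw [sub_self]
        exact mul_pos (by linarith) hp
      · have hjA := hsub n hn hj
        have e1 := abs_le.1 (hconc j hjA n hn)
        have e2 := abs_le.1 (hconc a₁ ha₁ n hn)
        have e3 := hmax j hjA hja
        have e4 : 2 * α n ≤ c * α n := mul_le_mul_of_nonneg_right hc hp.le
        linarith [e1.2, e2.1]
  have h2 : ∀ ℓ ∈ A, ℓ ≠ a₁ → ∀ t : ℕ, 1 ≤ t →
      α t ≤ (r a₁ - r ℓ) / (c + 2) → ℓ ∉ S (t + 1) := by
    intro ℓ hℓ _ t ht hle hmem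
    have e := ((hSrec t ht ℓ).1 hmem).2 a₁ (h1 t ht)
    rw [le_div_iff₀ (by linarith)] at hle
    have e1 := abs_le.1 (hconc ℓ hℓ t ht)
    have e2 := abs_le.1 (hconc a₁ ha₁ t ht)
    nlinarith [e1.2, e2.1]
  refine ⟨h1, h2, ?_⟩
  have hlim : Filter.Tendsto α Filter.atTop (nhds 0) := by
    have hl : Filter.Tendsto (fun x : ℝ => Real.log x / x) Filter.atTop (nhds 0) :=
      Real.isLittleO_log_id_atTop.tendsto_div_nhds_zero
    have hl' := hl.comp (tendsto_natCast_atTop_atTop (R := ℝ))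
    have hc' := tendsto_const_div_atTop_nhds_zero_nat
      (Real.log (4 * (K : ℝ) * (A.card : ℝ) / δ))
    have hs := (hc'.add (hl'.const_mul 2)).sqrt
    simp only [mul_zero, add_zero, Real.sqrt_zero] at hs
    refine hs.congr' ?_
    filter_upwards [Filter.eventually_ge_atTop 1] with t ht
    have ht' : (1 : ℝ) ≤ (t : ℝ) := by exact_mod_cast ht
    rw [hα t ht]
    congr 1
    have hC : 4 * (K : ℝ) * (A.card : ℝ) / δ ≠ 0 := by positivity
    have : 4 * (K : ℝ) * (A.card : ℝ) * (t : ℝ) ^ 2 / δ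
        = 4 * (K : ℝ) * (A.card : ℝ) / δ * (t : ℝ) ^ 2 := by ring
    rw [this, Real.log_mul hC (by positivity), Real.log_pow]
    simp only [Function.comp]
    push_cast
    ring
  have hev : ∀ᶠ t in Filter.atTop, ∀ ℓ ∈ A, ℓ ≠ a₁ → α t ≤ (r a₁ - r ℓ) / (c + 2) := by
    rw [Filter.eventually_all_finset]
    intro ℓ hℓ
    by_cases h : ℓ = a₁
    · exact Filter.Eventually.of_forall fun t h' => absurd h h'
    · have : 0 < (r a₁ - r ℓ) / (c + 2) :=
        div_pos (by linarith [hmax ℓ hℓ h]) (by linarith)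
      filter_upwards [hlim.eventually (gt_mem_nhds this)] with t ht _
      exact ht.le
  obtain ⟨N, hN⟩ := Filter.eventually_atTop.1 hev
  refine ⟨max N 1, le_max_right _ _, fun t ht => ?_⟩
  obtain ⟨s, rfl⟩ : ∃ s, t = s + 1 := ⟨t - 1, by omega⟩
  have hsN : N ≤ s := by omega
  have hs1 : 1 ≤ s := by omega
  ext x
  rw [Finset.mem_singleton]
  constructor
  · intro hx
    by_contra hne
    have hxA := hsub (s + 1) (by omega) hx
    exact h2 x hxA hne s hs1 (hN s hsN x hxA hne) hx
  · rintro rfl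
    exact h1 _ (by omega)
end

section
/- Confidence width at termination of local successive elimination (Lemma 3 of the paper, stated deterministically on the concentration event): let A be a finite set with |A| ≥ 2, K ≥ 1 a natural number, δ ∈ (0,1), c > 2 a real number, and define α(t) = sqrt( log(4·K·|A|·t²/δ) / t ) for integers t ≥ 1. Let r : A → [0,1] have a unique maximizer a₁, set Δ* = r_{a₁} − max_{ℓ ∈ A \ {a₁}} r_ℓ, and suppose r̂ : A × {1,2,…} → ℝ satisfies |r̂_ℓ(t) − r_ℓ| ≤ α(t) for every ℓ ∈ A and integer t ≥ 1. Define S(1) = A and S(t+1) = { ℓ ∈ S(t) : max_{j ∈ S(t)} r̂_j(t) − r̂_ℓ(t) < c·α(t) }. If t̄ ≥ 1 is an integer such that |S(t̄+1)| = 1 and |S(t)| > 1 for all 1 ≤ t ≤ t̄ (i.e., t̄ is the terminal epoch), then α(t̄) < ( c/(c−2)² )·Δ*. -/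
lemma alpha_aux (C s t : ℝ) (hC : 8 ≤ C) (hs : 1 ≤ s) (hst : s ≤ t) :
    0 < Real.log (C * s ^ 2) / s ∧ Real.log (C * t ^ 2) / t ≤ Real.log (C * s ^ 2) / s := by
  have hs0 : 0 < s := by linarith
  have ht0 : 0 < t := by linarith
  have h8 : 2 ≤ Real.log (C * s ^ 2) := by
    have h1 : Real.log 8 ≤ Real.log (C * s ^ 2) := by
      apply Real.log_le_log (by norm_num)
      nlinarith
    have h2 : Real.log 8 = 3 * Real.log 2 := by
      rw [show (8 : ℝ) = 2 ^ 3 by norm_num, Real.log_pow]; norm_num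
    have := Real.log_two_gt_d9
    linarith
  refine ⟨by positivity, ?_⟩
  have e : Real.log (C * t ^ 2) = Real.log (C * s ^ 2) + 2 * Real.log (t / s) := by
    rw [Real.log_mul (by positivity) (by positivity), Real.log_mul (by positivity) (by positivity),
      Real.log_div (by positivity) (by positivity), Real.log_pow, Real.log_pow]
    push_cast; ring
  have hl := Real.log_le_sub_one_of_pos (div_pos ht0 hs0)
  have hl2 : s * Real.log (t / s) ≤ t - s := by
    calc s * Real.log (t / s) ≤ s * (t / s - 1) := by gcongr
      _ = t - s := by field_simp
  rw [div_le_div_iff₀ ht0 hs0, e]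
  nlinarith

/-- Confidence width at termination of local successive elimination (Lemma 3 of the paper,
stated deterministically on the concentration event). With `c > 2`, confidence radius
`α(t) = sqrt(log(4 K |A| t² / δ) / t)`, unique best arm `a₁`, gap
`Δ* = r a₁ - max_{ℓ ∈ A \ {a₁}} r ℓ`, concentration of empirical means, and active sets as
in Algorithm 1, if `t̄` is the terminal epoch (`|S(t̄+1)| = 1` and `|S(t)| > 1` for all
`1 ≤ t ≤ t̄`) then `α(t̄) < (c/(c-2)²) Δ*`. -/
theorem confidence_width_at_termination {κ : Type*} [DecidableEq κ]
    (A : Finset κ) (hA : 2 ≤ A.card) (K : ℕ) (hK : 1 ≤ K)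
    (δ : ℝ) (hδ0 : 0 < δ) (hδ1 : δ < 1) (c : ℝ) (hc : 2 < c)
    (α : ℕ → ℝ)
    (hα : ∀ t : ℕ, 1 ≤ t →
      α t = Real.sqrt (Real.log (4 * (K : ℝ) * (A.card : ℝ) * (t : ℝ) ^ 2 / δ) / (t : ℝ)))
    (r : κ → ℝ) (hr : ∀ ℓ ∈ A, r ℓ ∈ Set.Icc (0 : ℝ) 1)
    (a₁ : κ) (ha₁ : a₁ ∈ A) (hmax : ∀ ℓ ∈ A, ℓ ≠ a₁ → r ℓ < r a₁)
    (rhat : κ → ℕ → ℝ)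
    (hconc : ∀ ℓ ∈ A, ∀ t : ℕ, 1 ≤ t → |rhat ℓ t - r ℓ| ≤ α t)
    (S : ℕ → Finset κ) (hS1 : S 1 = A)
    (hSrec : ∀ t : ℕ, 1 ≤ t → ∀ ℓ : κ,
      ℓ ∈ S (t + 1) ↔ ℓ ∈ S t ∧ ∀ j ∈ S t, rhat j t - rhat ℓ t < c * α t)
    (tbar : ℕ) (htbar1 : 1 ≤ tbar)
    (hterm : (S (tbar + 1)).card = 1)
    (hbefore : ∀ t : ℕ, 1 ≤ t → t ≤ tbar → 1 < (S t).card) :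
    α tbar < c / (c - 2) ^ 2 *
      (r a₁ - (A.erase a₁).sup' (by
        rw [← Finset.card_pos, Finset.card_erase_of_mem ha₁]; omega) r) := by
  have hC : (8 : ℝ) ≤ 4 * (K : ℝ) * (A.card : ℝ) / δ := by
    have h1 : (1 : ℝ) ≤ K := by exact_mod_cast hK
    have h2 : (2 : ℝ) ≤ A.card := by exact_mod_cast hA
    rw [le_div_iff₀ hδ0]
    nlinarith
  have hα' : ∀ t : ℕ, 1 ≤ t →
      α t = Real.sqrt (Real.log (4 * (K : ℝ) * (A.card : ℝ) / δ * (t : ℝ) ^ 2) / (t : ℝ)) := by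
    intro t ht
    rw [hα t ht]; congr 3; ring
  have hpos : ∀ t : ℕ, 1 ≤ t → 0 < α t := by
    intro t ht
    rw [hα' t ht]
    exact Real.sqrt_pos.2 (alpha_aux _ _ _ hC (by exact_mod_cast ht) le_rfl).1
  have hmono : ∀ s t : ℕ, 1 ≤ s → s ≤ t → α t ≤ α s := by
    intro s t hs hst
    rw [hα' s hs, hα' t (hs.trans hst)]
    exact Real.sqrt_le_sqrt
      (alpha_aux _ _ _ hC (by exact_mod_cast hs) (by exact_mod_cast hst)).2
  have hsub : ∀ t : ℕ, 1 ≤ t → S t ⊆ A := by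
    intro t ht
    induction t, ht using Nat.le_induction with
    | base => rw [hS1]
    | succ n hn ih => exact fun x hx => ih ((hSrec n hn x).1 hx).1
  have hle : ∀ ℓ ∈ A, r ℓ ≤ r a₁ := by
    intro ℓ hℓ
    by_cases h : ℓ = a₁
    · rw [h]
    · exact (hmax ℓ hℓ h).le
  have hbest : ∀ t : ℕ, 1 ≤ t → a₁ ∈ S t := by
    intro t ht
    induction t, ht using Nat.le_induction with
    | base => rw [hS1]; exact ha₁
    | succ n hn ih =>
      refine (hSrec n hn a₁).2 ⟨ih, fun j hj => ?_⟩
      have hjA := hsub n hn hj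
      have h1 := abs_le.1 (hconc j hjA n hn)
      have h2 := abs_le.1 (hconc a₁ ha₁ n hn)
      have h3 := hle j hjA
      have := hpos n hn
      nlinarith
  have hne : (A.erase a₁).Nonempty := by
    rw [← Finset.card_pos, Finset.card_erase_of_mem ha₁]; omega
  obtain ⟨ℓ, hℓ, hℓe⟩ := Finset.exists_mem_eq_sup' hne r
  rw [hℓe]
  have hℓne := Finset.ne_of_mem_erase hℓ
  have hℓA := Finset.mem_of_mem_erase hℓ
  have hnot : ℓ ∉ S (tbar + 1) := by
    intro h
    exact hℓne (Finset.card_le_one.1 hterm.le ℓ h a₁ (hbest _ (by omega)))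
  have key : ∀ t : ℕ, 1 ≤ t → ℓ ∉ S (t + 1) → (c - 2) * α t ≤ r a₁ - r ℓ := by
    intro t ht
    have step : ∀ n : ℕ, 1 ≤ n → ℓ ∈ S n → ℓ ∉ S (n + 1) → (c - 2) * α n ≤ r a₁ - r ℓ := by
      intro n hn hin hout
      rw [hSrec n hn] at hout
      push Not at hout
      obtain ⟨j, hj, hjl⟩ := hout hin
      have hjA := hsub n hn hj
      have h1 := abs_le.1 (hconc j hjA n hn)
      have h2 := abs_le.1 (hconc ℓ hℓA n hn)
      have h3 := hle j hjA
      nlinarith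
    induction t, ht using Nat.le_induction with
    | base => exact step 1 le_rfl (by rw [hS1]; exact hℓA)
    | succ n hn ih =>
      intro hout
      by_cases h : ℓ ∈ S (n + 1)
      · exact step (n + 1) (by omega) h hout
      · have := ih h
        have hm := hmono n (n + 1) hn (by omega)
        nlinarith
  have hk := key tbar htbar1 hnot
  have hΔ : 0 < r a₁ - r ℓ := sub_pos.2 (hmax ℓ hℓA hℓne)
  have hc2 : 0 < c - 2 := by linarith
  rw [div_mul_eq_mul_div, lt_div_iff₀ (by positivity)]
  nlinarith
end

section
/- The trimming operator returns a value in the convex hull of honest values: let C be a finite set, m : C → ℝ, f a natural number, and J ⊆ C with |J| ≤ f; write H = C \ J for the honest indices. Suppose w ∈ C satisfies |{ u ∈ C \ {w} : m(u) ≥ m(w) }| ≥ f and |{ u ∈ C \ {w} : m(u) ≤ m(w) }| ≥ f (as holds for any index whose value survives the removal of the f largest and f smallest values from {m(u)}_{u ∈ C}). Then H is nonempty and there exist u, v ∈ H with m(v) ≤ m(w) ≤ m(u); in particular m(w) lies in the convex hull of { m(i) : i ∈ H }. -/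
/-- The trimming operator returns a value in the convex hull of honest values: if `w ∈ C`
has at least `f` values above it and at least `f` values below it among `C \ {w}` (as holds
for any value surviving the `Trim` operation with parameter `f`), and the adversarial set
`J ⊆ C` has at most `f` elements, then the honest set `H = C \ J` is nonempty and there are
honest `u, v` with `m v ≤ m w ≤ m u`; in particular `m w` lies in the convex hull of the
honest values. -/
theorem trim_in_convex_hull_of_honest {ι : Type*} [DecidableEq ι]
    (C : Finset ι) (m : ι → ℝ) (f : ℕ)
    (J : Finset ι) (hJC : J ⊆ C) (hJ : J.card ≤ f)
    (w : ι) (hw : w ∈ C)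
    (hge : f ≤ ((C.erase w).filter (fun u => m w ≤ m u)).card)
    (hle : f ≤ ((C.erase w).filter (fun u => m u ≤ m w)).card) :
    (C \ J).Nonempty ∧
    (∃ u ∈ C \ J, ∃ v ∈ C \ J, m v ≤ m w ∧ m w ≤ m u) ∧
    m w ∈ convexHull ℝ (m '' ↑(C \ J)) := by
  have key : ∀ p : ι → Prop, ∀ _ : DecidablePred p, p w →
      f ≤ ((C.erase w).filter p).card → ∃ u ∈ C \ J, p u := by
    intro p _ hp hf
    have hn : w ∉ (C.erase w).filter p := by simp
    have hc : J.card < (insert w ((C.erase w).filter p)).card := by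
      rw [Finset.card_insert_of_notMem hn]; omega
    obtain ⟨u, hu, huJ⟩ := Finset.exists_mem_notMem_of_card_lt_card hc
    rcases Finset.mem_insert.1 hu with rfl | hu
    · exact ⟨u, Finset.mem_sdiff.2 ⟨hw, huJ⟩, hp⟩
    · obtain ⟨h1, h2⟩ := Finset.mem_filter.1 hu
      exact ⟨u, Finset.mem_sdiff.2 ⟨Finset.mem_of_mem_erase h1, huJ⟩, h2⟩
  obtain ⟨u, hu, hmu⟩ := key (fun u => m w ≤ m u) _ (le_refl (m w)) hge
  obtain ⟨v, hv, hmv⟩ := key (fun u => m u ≤ m w) _ (le_refl (m w)) hle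
  refine ⟨⟨u, hu⟩, ⟨u, hu, v, hv, hmv, hmu⟩, ?_⟩
  have hseg : m w ∈ segment ℝ (m v) (m u) := by
    rw [segment_eq_Icc (hmv.trans hmu)]
    exact ⟨hmv, hmu⟩
  exact segment_subset_convexHull (Set.mem_image_of_mem m (Finset.mem_coe.2 hv))
    (Set.mem_image_of_mem m (Finset.mem_coe.2 hu)) hseg
end

section
/- Explicit per-arm elimination time for the Fed-SEL confidence radius: let δ ∈ (0,1) and let M ≥ 2 be a natural number; set c̄ = sqrt(4·M/δ) and α(t) = sqrt( log(4·M·t²/δ) / t ) for real t ≥ 1 (so that α(t) = sqrt(2·log(c̄·t)/t)). Then for every Δ ∈ (0,1] and every real t ≥ 1 with t ≥ (32/Δ²)·( log(32·c̄/Δ²) + 4·log(log(32·c̄/Δ²)) ), one has α(t) ≤ Δ/4. -/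
/-- Explicit per-arm elimination time for the Fed-SEL confidence radius: with `δ ∈ (0,1)`,
`M ≥ 2`, `c̄ = sqrt(4M/δ)`, and `α(t) = sqrt(log(4 M t² / δ) / t)`, for every `Δ ∈ (0,1]`
and every real `t ≥ 1` with `t ≥ (32/Δ²)(log(32 c̄ / Δ²) + 4 log log(32 c̄ / Δ²))`, one has
`α(t) ≤ Δ/4`. -/
theorem explicit_elimination_time (δ : ℝ) (M : ℕ)
    (hδ0 : 0 < δ) (hδ1 : δ < 1) (hM : 2 ≤ M)
    (Δ t : ℝ) (hΔ0 : 0 < Δ) (hΔ1 : Δ ≤ 1) (ht1 : 1 ≤ t)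
    (ht : 32 / Δ ^ 2 * (Real.log (32 * Real.sqrt (4 * (M : ℝ) / δ) / Δ ^ 2)
        + 4 * Real.log (Real.log (32 * Real.sqrt (4 * (M : ℝ) / δ) / Δ ^ 2))) ≤ t) :
    Real.sqrt (Real.log (4 * (M : ℝ) * t ^ 2 / δ) / t) ≤ Δ / 4 := by
  have hM' : (2:ℝ) ≤ M := by exact_mod_cast hM
  have hq : 1 ≤ 4 * (M : ℝ) / δ := by
    rw [le_div_iff₀ hδ0]; linarith
  set c := Real.sqrt (4 * (M : ℝ) / δ) with hc
  have hc1 : 1 ≤ c := by rw [hc]; exact Real.one_le_sqrt.mpr hq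
  have hc2 : c ^ 2 = 4 * (M : ℝ) / δ := Real.sq_sqrt (by linarith)
  have hD : 0 < Δ ^ 2 := by positivity
  have hD1 : Δ ^ 2 ≤ 1 := pow_le_one₀ hΔ0.le hΔ1
  set X := 32 * c / Δ ^ 2 with hX
  have hX32 : 32 ≤ X := by
    rw [hX, le_div_iff₀ hD]; nlinarith
  set L := Real.log X with hL
  have hL2 : 2 ≤ L := by
    have h1 : Real.log 32 ≤ L := Real.log_le_log (by norm_num) hX32
    have h2 : Real.log 32 = 5 * Real.log 2 := by
      rw [show (32:ℝ) = 2 ^ 5 by norm_num, Real.log_pow]; norm_num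
    have := Real.log_two_gt_d9
    linarith
  have hl0 : 0 ≤ Real.log L := Real.log_nonneg (by linarith)
  have hl1 : Real.log L ≤ L - 1 := Real.log_le_sub_one_of_pos (by linarith)
  set a := L + 4 * Real.log L with ha
  have ha1 : 1 ≤ a := by linarith
  obtain ⟨s, hs⟩ : ∃ s, s = t * Δ ^ 2 / 32 := ⟨_, rfl⟩
  have has : a ≤ s := by
    rw [hs, le_div_iff₀ (by norm_num)]
    have h : 32 / Δ ^ 2 * a * Δ ^ 2 ≤ t * Δ ^ 2 := mul_le_mul_of_nonneg_right ht hD.le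
    have h' : 32 / Δ ^ 2 * a * Δ ^ 2 = 32 * a := by field_simp
    linarith
  have hs0 : 0 < s := by linarith
  have hloga : Real.log a ≤ 4 * Real.log L := by
    have h : a ≤ L ^ 4 := by
      have h8 : (2:ℝ) ^ 3 ≤ L ^ 3 := pow_le_pow_left₀ (by norm_num) hL2 3
      have : L ^ 4 = L ^ 3 * L := by ring
      nlinarith
    have := Real.log_le_log (by linarith) h
    rw [Real.log_pow] at this
    exact_mod_cast this
  have hlogs : Real.log s ≤ Real.log a + (s - a) := by
    have h := Real.log_le_sub_one_of_pos (x := s / a) (by positivity)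
    rw [Real.log_div (by positivity) (by positivity)] at h
    have h2 : s / a ≤ s - a + 1 := by
      rw [div_le_iff₀ (by linarith)]; nlinarith
    linarith
  have hkey : Real.log (c * t) ≤ s := by
    have : c * t = X * s := by rw [hX, hs]; field_simp
    rw [this, Real.log_mul (by positivity) (by positivity)]
    linarith
  have e : 4 * (M : ℝ) * t ^ 2 / δ = (c * t) ^ 2 := by
    rw [mul_pow, hc2]; ring
  rw [e, Real.log_pow]
  apply Real.sqrt_le_iff.mpr
  refine ⟨by positivity, ?_⟩
  rw [div_le_iff₀ (by linarith)]
  push_cast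
  rw [hs] at hkey
  nlinarith
end
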